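/- Let D be a quotient-closed lattice, whose members are all regular languages, closed under marked concatenation, and let ρ : 2^{A*} → R be a multiplicative rating map. Then for every K₁, K₂ ∈ D and every letter a ∈ A: I_{Bool(D)}[K₁aK₂, ρ] = ↓_R ( I_{Bool(D)}[K₁, ρ] · {ρ({a})} · I_{Bool(D)}[K₂, ρ] ). -/

import Mathlib

open Set

namespace Paper

abbrev Lang (A : Type) := Set (List A)
abbrev LClass (A : Type) := Set (Set (List A))

variable {A R M : Type}

/-- A lattice of languages: contains `∅` and `A*`, closed under finite union
and finite intersection. -/
def LangLattice (𝒞 : LClass A) : Prop :=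
  (∅ : Lang A) ∈ 𝒞 ∧ (Set.univ : Lang A) ∈ 𝒞 ∧
    (∀ K L : Lang A, K ∈ 𝒞 → L ∈ 𝒞 → K ∪ L ∈ 𝒞) ∧
    (∀ K L : Lang A, K ∈ 𝒞 → L ∈ 𝒞 → K ∩ L ∈ 𝒞)

/-- A Boolean algebra of languages: a lattice closed under complement. -/
def LangBoolAlg (𝒞 : LClass A) : Prop :=
  LangLattice 𝒞 ∧ ∀ L : Lang A, L ∈ 𝒞 → Lᶜ ∈ 𝒞

/-- A class is quotient-closed when it is closed under left and right quotients
by words. -/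
def QuotientClosed (𝒞 : LClass A) : Prop :=
  ∀ L ∈ 𝒞, ∀ w : List A,
    {u : List A | w ++ u ∈ L} ∈ 𝒞 ∧ {u : List A | u ++ w ∈ L} ∈ 𝒞

/-- The canonical preorder `≤_𝒞` associated with a class `𝒞`. -/
def cle (𝒞 : LClass A) (w w' : List A) : Prop := ∀ L ∈ 𝒞, w ∈ L → w' ∈ L

/-- The canonical equivalence `∼_𝒞` associated with a class `𝒞`. -/
def ceq (𝒞 : LClass A) (w w' : List A) : Prop := ∀ L ∈ 𝒞, (w ∈ L ↔ w' ∈ L)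

/-- The `∼_𝒞`-class of the word `w`. -/
def cclass (𝒞 : LClass A) (w : List A) : Lang A := {v | ceq 𝒞 w v}

/-- `D` is a `∼_𝒞`-class. -/
def IsCClass (𝒞 : LClass A) (D : Lang A) : Prop := ∃ w : List A, D = cclass 𝒞 w

/-- Multiplication of `∼_𝒞`-classes (the class of the concatenation of
representatives). -/
def cmul (𝒞 : LClass A) (D E : Lang A) : Lang A :=
  {x | ∃ u ∈ D, ∃ v ∈ E, ceq 𝒞 (u ++ v) x}

/-- Language concatenation. -/
def cat (K L : Lang A) : Lang A := {w | ∃ u ∈ K, ∃ v ∈ L, u ++ v = w}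

/-- Marked concatenation `K a L`. -/
def mcat (K : Lang A) (a : A) (L : Lang A) : Lang A :=
  {w | ∃ u ∈ K, ∃ v ∈ L, u ++ a :: v = w}

/-- Boolean closure: the least Boolean algebra containing `𝒞`. -/
def BoolC (𝒞 : LClass A) : LClass A := ⋂₀ {𝒟 : LClass A | LangBoolAlg 𝒟 ∧ 𝒞 ⊆ 𝒟}

/-- Polynomial closure: the least class containing `𝒞` closed under union and
marked concatenation. -/
def PolC (𝒞 : LClass A) : LClass A :=
  ⋂₀ {𝒟 : LClass A | 𝒞 ⊆ 𝒟 ∧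
    (∀ K L : Lang A, K ∈ 𝒟 → L ∈ 𝒟 → K ∪ L ∈ 𝒟) ∧
    (∀ (K L : Lang A) (a : A), K ∈ 𝒟 → L ∈ 𝒟 → mcat K a L ∈ 𝒟)}

/-- A cover of `L`: a finite set of languages whose union includes `L`. -/
def IsCover (Ks : LClass A) (L : Lang A) : Prop := Ks.Finite ∧ L ⊆ ⋃₀ Ks

/-- A `𝒞`-cover of `L`: a cover all of whose members belong to `𝒞`. -/
def IsCCover (𝒞 Ks : LClass A) (L : Lang A) : Prop := IsCover Ks L ∧ Ks ⊆ 𝒞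

/-- `α : A* → M` is a monoid morphism. -/
def IsMonoidMorphism [Monoid M] (α : List A → M) : Prop :=
  α [] = 1 ∧ ∀ u v : List A, α (u ++ v) = α u * α v

/-- `α` recognizes `L`. -/
def Recognizes [Monoid M] (α : List A → M) (L : Lang A) : Prop :=
  ∃ F : Set M, L = α ⁻¹' F

/-- A language is regular when it is recognized by a monoid morphism into a
finite monoid. -/
def RegularLang (L : Lang A) : Prop :=
  ∃ (N : Type) (_ : Monoid N) (_ : Finite N) (α : List A → N),
    IsMonoidMorphism α ∧ Recognizes α L

/-- The canonical order on a rating set: `r ≤ s` iff `r + s = s`. -/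
def rle [Add R] (r s : R) : Prop := r + s = s

/-- A rating map: maps `∅` to `0` and commutes with binary union. -/
def IsRatingMap [AddCommMonoid R] (ρ : Lang A → R) : Prop :=
  ρ ∅ = 0 ∧ ∀ K L : Lang A, ρ (K ∪ L) = ρ K + ρ L

/-- A nice rating map: the value of any language is a finite sum of values of
its words. -/
def IsNice [AddCommMonoid R] (ρ : Lang A → R) : Prop :=
  ∀ K : Lang A, ∃ l : List (List A), (∀ w ∈ l, w ∈ K) ∧
    ρ K = (l.map fun w => ρ {w}).sum

/-- A multiplicative rating map: also a morphism for concatenation. -/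
def IsMultiplicative [Semiring R] (ρ : Lang A → R) : Prop :=
  ρ ({[]} : Lang A) = 1 ∧ ∀ K L : Lang A, ρ (cat K L) = ρ K * ρ L

/-- An endomorphism of the additive monoid `(R, +)`. -/
def IsAddEndo [AddCommMonoid R] (γ : R → R) : Prop :=
  γ 0 = 0 ∧ ∀ r s : R, γ (r + s) = γ r + γ s

/-- A quasi-multiplicative rating map for the endomorphism `γ`. -/
def IsQuasiMult [Semiring R] (ρ : Lang A → R) (γ : R → R) : Prop :=
  IsAddEndo γ ∧ (∀ q r s : R, γ (q * γ r * s) = γ (q * r * s)) ∧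
    ∀ K L : Lang A, ρ (cat K L) = γ (ρ K * ρ L)

/-- The `ρ`-imprint of a set of languages. -/
def imprint [Add R] (ρ : Lang A → R) (Ks : LClass A) : Set R :=
  {r | ∃ K ∈ Ks, rle r (ρ K)}

/-- The `𝒟`-optimal `ρ`-imprint on `L` (the imprint of any optimal `𝒟`-cover
of `L`, i.e. the intersection of the imprints of all `𝒟`-covers of `L`). -/
def optImprint [Add R] (𝒟 : LClass A) (ρ : Lang A → R) (L : Lang A) : Set R :=
  {r | ∀ Ks : LClass A, IsCCover 𝒟 Ks L → r ∈ imprint ρ Ks}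

/-- Downset operation on subsets of a rating set. -/
def dclos [Add R] (U : Set R) : Set R := {r | ∃ s ∈ U, rle r s}

/-- Pointwise multiplication of subsets of a rating set. -/
def smul [Mul R] (U V : Set R) : Set R := {x | ∃ u ∈ U, ∃ v ∈ V, u * v = x}

/-!
For `⊇`, optimal imprints of any quotient-closed lattice `𝒞` of regular languages are
submultiplicative: given a `𝒞`-cover of `K L`, its finitely many left quotients generate a cover
of `L` by upsets, and for each upset `V` the languages `{u | u V ⊆ M}`, with `M` in the given
cover, form a `𝒞`-cover of `K`.

For `⊆`, take a finite `F ⊆ 𝒟` containing `K₁` and `K₂` and fine enough that the `∼_F`-classes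
meeting `Kᵢ` realise its optimal imprint. The languages `↑u a ↑v`, where `↑u` is the upset of `u`
for `≤_F`, are finitely many and lie in `𝒟`. If `w = u a v` is a factorisation maximal for `≤_F`
and `w'` lies in the same languages `↑x a ↑y` as `w`, then `w'` factors as `u' a v'` above
`(u, v)`, and `w` in turn factors above `(u', v')`; maximality forces `u ∼_F u'` and `v ∼_F v'`.
So the Boolean atoms of these languages cover `K₁ a K₂` and each of them is included in a marked
concatenation of two `∼_F`-classes.
-/

/-! ### Boolean closure -/

section BoolC

variable {𝒞 𝒟 : LClass A} {L : Lang A}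

theorem LangLattice.sInter_mem (h𝒞 : LangLattice 𝒞) {F : LClass A} (hF : F.Finite)
    (hF𝒞 : F ⊆ 𝒞) : ⋂₀ F ∈ 𝒞 := by
  obtain ⟨-, huniv, -, hinter⟩ := h𝒞
  induction F, hF using Set.Finite.induction_on with
  | empty => rwa [sInter_empty]
  | @insert L F _ _ ih =>
    rw [insert_subset_iff] at hF𝒞
    rw [sInter_insert]
    exact hinter _ _ hF𝒞.1 (ih hF𝒞.2)

theorem langBoolAlg_of_univ_inter_compl (huniv : univ ∈ 𝒞)
    (hinter : ∀ K L : Lang A, K ∈ 𝒞 → L ∈ 𝒞 → K ∩ L ∈ 𝒞) (hcompl : ∀ L ∈ 𝒞, Lᶜ ∈ 𝒞) :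
    LangBoolAlg 𝒞 := by
  refine ⟨⟨?_, huniv, fun K L hK hL => ?_, hinter⟩, hcompl⟩
  · rw [← compl_univ]
    exact hcompl _ huniv
  · rw [← compl_compl (K ∪ L), compl_union]
    exact hcompl _ (hinter _ _ (hcompl _ hK) (hcompl _ hL))

theorem langBoolAlg_boolC (𝒟 : LClass A) : LangBoolAlg (BoolC 𝒟) :=
  langBoolAlg_of_univ_inter_compl (fun _ hℬ => hℬ.1.1.2.1)
    (fun _ _ hK hL ℬ hℬ => hℬ.1.1.2.2.2 _ _ (hK ℬ hℬ) (hL ℬ hℬ))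
    (fun _ hL ℬ hℬ => hℬ.1.2 _ (hL ℬ hℬ))

theorem subset_boolC (𝒟 : LClass A) : 𝒟 ⊆ BoolC 𝒟 :=
  subset_sInter fun _ hℬ => hℬ.2

theorem boolC_mono (h : 𝒞 ⊆ 𝒟) : BoolC 𝒞 ⊆ BoolC 𝒟 :=
  sInter_subset_of_mem ⟨langBoolAlg_boolC 𝒟, h.trans (subset_boolC 𝒟)⟩

@[elab_as_elim]
theorem boolC_induction {P : Lang A → Prop} (mem : ∀ L ∈ 𝒟, P L) (univ : P univ)
    (inter : ∀ K L, P K → P L → P (K ∩ L)) (compl : ∀ L, P L → P Lᶜ) (hL : L ∈ BoolC 𝒟) : P L :=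
  hL {K | P K} ⟨langBoolAlg_of_univ_inter_compl univ inter compl, mem⟩

theorem exists_finite_subset_mem_boolC (hL : L ∈ BoolC 𝒟) :
    ∃ F : LClass A, F.Finite ∧ F ⊆ 𝒟 ∧ L ∈ BoolC F := by
  refine boolC_induction ?mem ?univ ?inter ?compl hL
  case mem =>
    intro L hL
    exact ⟨{L}, finite_singleton L, singleton_subset_iff.2 hL, subset_boolC _ (mem_singleton L)⟩
  case univ => exact ⟨∅, finite_empty, empty_subset _, (langBoolAlg_boolC _).1.2.1⟩
  case inter =>
    rintro K L ⟨F, hF, hF𝒟, hK⟩ ⟨G, hG, hG𝒟, hL⟩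
    exact ⟨F ∪ G, hF.union hG, union_subset hF𝒟 hG𝒟, (langBoolAlg_boolC _).1.2.2.2 _ _
      (boolC_mono subset_union_left hK) (boolC_mono subset_union_right hL)⟩
  case compl =>
    rintro L ⟨F, hF, hF𝒟, hL⟩
    exact ⟨F, hF, hF𝒟, (langBoolAlg_boolC F).2 _ hL⟩

theorem exists_finite_subset_subset_boolC {Ks : LClass A} (hKs : Ks.Finite)
    (hKs𝒟 : Ks ⊆ BoolC 𝒟) : ∃ F : LClass A, F.Finite ∧ F ⊆ 𝒟 ∧ Ks ⊆ BoolC F := by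
  choose! F hF hF𝒟 hmem using fun L (hL : L ∈ Ks) => exists_finite_subset_mem_boolC (hKs𝒟 hL)
  exact ⟨⋃ L ∈ Ks, F L, hKs.biUnion hF, iUnion₂_subset hF𝒟,
    fun L hL => boolC_mono (subset_biUnion_of_mem hL) (hmem L hL)⟩

theorem QuotientClosed.boolC (h𝒟 : QuotientClosed 𝒟) : QuotientClosed (BoolC 𝒟) := by
  intro L hL w
  have hBool := langBoolAlg_boolC 𝒟
  refine boolC_induction ?mem ?univ ?inter ?compl hL
  case mem => exact fun L hL => (h𝒟 L hL w).imp (subset_boolC 𝒟 ·) (subset_boolC 𝒟 ·)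
  case univ => exact ⟨hBool.1.2.1, hBool.1.2.1⟩
  case inter =>
    exact fun K L hK hL => ⟨hBool.1.2.2.2 _ _ hK.1 hL.1, hBool.1.2.2.2 _ _ hK.2 hL.2⟩
  case compl => exact fun L hL => hL.imp (hBool.2 _) (hBool.2 _)

end BoolC

/-! ### Regular languages -/

section Regular

variable {𝒟 : LClass A} {K L : Lang A}

theorem regularLang_univ : RegularLang (univ : Lang A) :=
  ⟨Unit, inferInstance, inferInstance, fun _ => 1, ⟨rfl, fun _ _ => rfl⟩, univ, preimage_univ.symm⟩

theorem RegularLang.compl (hL : RegularLang L) : RegularLang Lᶜ := by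
  obtain ⟨N, _, _, α, hα, S, rfl⟩ := hL
  exact ⟨N, inferInstance, inferInstance, α, hα, Sᶜ, preimage_compl.symm⟩

theorem RegularLang.inter (hK : RegularLang K) (hL : RegularLang L) : RegularLang (K ∩ L) := by
  obtain ⟨M, _, _, α, hα, S, rfl⟩ := hK
  obtain ⟨N, _, _, β, hβ, T, rfl⟩ := hL
  exact ⟨M × N, inferInstance, inferInstance, fun w => (α w, β w),
    ⟨Prod.ext hα.1 hβ.1, fun u v => Prod.ext (hα.2 u v) (hβ.2 u v)⟩, S ×ˢ T, rfl⟩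

theorem regularLang_of_mem_boolC (h𝒟 : ∀ L ∈ 𝒟, RegularLang L) (hL : L ∈ BoolC 𝒟) :
    RegularLang L :=
  boolC_induction h𝒟 regularLang_univ (fun _ _ => RegularLang.inter)
    (fun _ => RegularLang.compl) hL

theorem RegularLang.finite_range_left_quotient (hL : RegularLang L) :
    (range fun w => {u | w ++ u ∈ L}).Finite := by
  obtain ⟨N, _, _, α, ⟨-, hα⟩, S, rfl⟩ := hL
  refine (finite_range fun n : N => {u | n * α u ∈ S}).subset (range_subset_iff.2 fun w => ?_)
  exact ⟨α w, by simp only [mem_preimage, hα]⟩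

theorem RegularLang.finite_range_right_quotient (hL : RegularLang L) :
    (range fun w => {u | u ++ w ∈ L}).Finite := by
  obtain ⟨N, _, _, α, ⟨-, hα⟩, S, rfl⟩ := hL
  refine (finite_range fun n : N => {u | α u * n ∈ S}).subset (range_subset_iff.2 fun w => ?_)
  exact ⟨α w, by simp only [mem_preimage, hα]⟩

end Regular

/-! ### Canonical preorders and covers by upsets -/

section Upsets

variable {𝒞 𝒟 F : LClass A} {u v w : List A}

theorem cle.trans (huv : cle 𝒞 u v) (hvw : cle 𝒞 v w) : cle 𝒞 u w :=
  fun L hL hu => hvw L hL (huv L hL hu)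

theorem ceq_of_cle_of_cle (huv : cle 𝒞 u v) (hvu : cle 𝒞 v u) : ceq 𝒞 u v :=
  fun L hL => ⟨huv L hL, hvu L hL⟩

theorem ceq.mono (h𝒞𝒟 : 𝒞 ⊆ 𝒟) (h : ceq 𝒟 u v) : ceq 𝒞 u v :=
  fun L hL => h L (h𝒞𝒟 hL)

theorem ceq.boolC (h : ceq 𝒞 u v) : ceq (BoolC 𝒞) u v := fun _ hL =>
  boolC_induction h Iff.rfl (fun _ _ hK hL => and_congr hK hL) (fun _ hL => not_congr hL) hL

/-- The upset `{v | u ≤_𝒞 v}` of the word `u` for the canonical preorder of `𝒞`. -/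
def cupset (𝒞 : LClass A) (u : List A) : Lang A := {v | cle 𝒞 u v}

theorem mem_cupset_self (𝒞 : LClass A) (u : List A) : u ∈ cupset 𝒞 u :=
  fun _ _ => id

theorem cupset_subset_cupset_iff : cupset 𝒞 v ⊆ cupset 𝒞 u ↔ cle 𝒞 u v :=
  ⟨fun h => h (mem_cupset_self 𝒞 v), fun huv _ hvw => huv.trans hvw⟩

theorem cupset_eq_sInter (𝒞 : LClass A) (u : List A) : cupset 𝒞 u = ⋂₀ {L ∈ 𝒞 | u ∈ L} := by
  ext v
  simp [cupset, cle]

theorem LangLattice.cupset_mem (h𝒞 : LangLattice 𝒞) (hF : F.Finite) (hF𝒞 : F ⊆ 𝒞)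
    (u : List A) : cupset F u ∈ 𝒞 := by
  rw [cupset_eq_sInter]
  exact h𝒞.sInter_mem (hF.sep _) ((sep_subset _ _).trans hF𝒞)

theorem finite_range_cupset (hF : F.Finite) : (range (cupset F)).Finite := by
  refine (hF.finite_subsets.image sInter).subset (range_subset_iff.2 fun u => ?_)
  exact ⟨_, sep_subset F _, (cupset_eq_sInter F u).symm⟩

theorem LangLattice.isCCover_image_cupset (h𝒞 : LangLattice 𝒞) (hF : F.Finite) (hF𝒞 : F ⊆ 𝒞)
    (L : Lang A) : IsCCover 𝒞 (cupset F '' L) L := by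
  refine ⟨⟨(finite_range_cupset hF).subset (image_subset_range _ _), fun u hu => ?_⟩, ?_⟩
  · exact ⟨_, mem_image_of_mem _ hu, mem_cupset_self F u⟩
  · exact image_subset_iff.2 fun u _ => h𝒞.cupset_mem hF hF𝒞 u

theorem cclass_eq_cupset_union_compl (𝒞 : LClass A) :
    cclass 𝒞 = cupset (𝒞 ∪ compl '' 𝒞) := by
  ext u v
  constructor
  · rintro h _ (hL | ⟨L, hL, rfl⟩)
    · exact (h _ hL).1
    · exact mt (h L hL).2
  · exact fun h L hL => ⟨h L (.inl hL), not_imp_not.1 (h Lᶜ (.inr (mem_image_of_mem _ hL)))⟩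

theorem LangBoolAlg.isCCover_image_cclass (h𝒞 : LangBoolAlg 𝒞) (hF : F.Finite) (hF𝒞 : F ⊆ 𝒞)
    (L : Lang A) : IsCCover 𝒞 (cclass F '' L) L := by
  rw [cclass_eq_cupset_union_compl]
  exact h𝒞.1.isCCover_image_cupset (hF.union (hF.image _))
    (union_subset hF𝒞 (image_subset_iff.2 fun L hL => h𝒞.2 L (hF𝒞 hL))) L

end Upsets

/-! ### Rating maps and optimal imprints -/

section Ratings

theorem rle.trans [AddSemigroup R] {r s t : R} (hrs : rle r s) (hst : rle s t) : rle r t := by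
  unfold rle at *
  rw [← hst, ← add_assoc, hrs]

theorem rle.mul [NonUnitalNonAssocSemiring R] {r s r' s' : R} (h : rle r s) (h' : rle r' s') :
    rle (r * r') (s * s') := by
  have hleft : rle (r * r') (s * r') := by rw [rle, ← add_mul, h]
  have hright : rle (s * r') (s * s') := by rw [rle, ← mul_add, h']
  exact hleft.trans hright

variable {𝒞 𝒟 : LClass A} {ρ : Lang A → R}

theorem IsRatingMap.mono [AddCommMonoid R] (hρ : IsRatingMap ρ) {K L : Lang A} (h : K ⊆ L) :
    rle (ρ K) (ρ L) := by
  rw [rle, ← hρ.2, union_eq_self_of_subset_left h]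

theorem mcat_eq_cat_cat (K L : Lang A) (a : A) : mcat K a L = cat (cat K {[a]}) L := by
  ext w
  simp [mcat, cat]

theorem IsMultiplicative.map_mcat [Semiring R] (hmult : IsMultiplicative ρ) (K L : Lang A)
    (a : A) : ρ (mcat K a L) = ρ K * ρ {[a]} * ρ L := by
  rw [mcat_eq_cat_cat, hmult.2, hmult.2]

theorem mem_optImprint_of_rle [AddSemigroup R] {L : Lang A} {r s : R}
    (hs : s ∈ optImprint 𝒞 ρ L) (hrs : rle r s) : r ∈ optImprint 𝒞 ρ L := by
  intro Ks hKs
  obtain ⟨K, hK, hsK⟩ := hs Ks hKs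
  exact ⟨K, hK, hrs.trans hsK⟩

theorem IsRatingMap.map_singleton_mem_optImprint [AddCommMonoid R] (hρ : IsRatingMap ρ)
    (𝒞 : LClass A) (w : List A) : ρ {w} ∈ optImprint 𝒞 ρ {w} := by
  rintro Ks ⟨⟨-, hcover⟩, -⟩
  obtain ⟨K, hK, hwK⟩ := hcover (mem_singleton w)
  exact ⟨K, hK, hρ.mono (singleton_subset_iff.2 hwK)⟩

theorem mul_mem_optImprint_cat [Semiring R] (h𝒞 : LangLattice 𝒞) (hqc : QuotientClosed 𝒞)
    (hreg : ∀ L ∈ 𝒞, RegularLang L) (hρ : IsRatingMap ρ) (hmult : IsMultiplicative ρ)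
    {K L : Lang A} {r s : R} (hr : r ∈ optImprint 𝒞 ρ K) (hs : s ∈ optImprint 𝒞 ρ L) :
    r * s ∈ optImprint 𝒞 ρ (cat K L) := by
  rintro Ks ⟨⟨hfin, hcover⟩, hKs𝒞⟩
  let F : LClass A := ⋃ M ∈ Ks, range fun w => {u | w ++ u ∈ M}
  have hF : F.Finite :=
    hfin.biUnion fun M hM => (hreg M (hKs𝒞 hM)).finite_range_left_quotient
  have hF𝒞 : F ⊆ 𝒞 :=
    iUnion₂_subset fun M hM => range_subset_iff.2 fun w => (hqc M (hKs𝒞 hM) w).1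
  obtain ⟨_, ⟨v, hv, rfl⟩, hsv⟩ := hs _ (h𝒞.isCCover_image_cupset hF hF𝒞 L)
  let Q : Lang A → Lang A := fun M => ⋂₀ ((fun x => {u | u ++ x ∈ M}) '' cupset F v)
  have hQcover : IsCCover 𝒞 (Q '' Ks) K := by
    refine ⟨⟨hfin.image Q, fun u hu => ?_⟩, image_subset_iff.2 fun M hM => ?_⟩
    · obtain ⟨M, hM, huvM⟩ := hcover ⟨u, hu, v, hv, rfl⟩
      have huM : {x | u ++ x ∈ M} ∈ F := mem_biUnion hM (mem_range_self u)
      exact ⟨Q M, mem_image_of_mem Q hM, forall_mem_image.2 fun x hx => hx _ huM huvM⟩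
    · exact h𝒞.sInter_mem
        ((hreg M (hKs𝒞 hM)).finite_range_right_quotient.subset (image_subset_range _ _))
        (image_subset_iff.2 fun x _ => (hqc M (hKs𝒞 hM) x).2)
  obtain ⟨_, ⟨M, hM, rfl⟩, hrM⟩ := hr _ hQcover
  have hQM : cat (Q M) (cupset F v) ⊆ M := by
    rintro _ ⟨u, hu, x, hx, rfl⟩
    exact hu _ (mem_image_of_mem _ hx)
  refine ⟨M, hM, (hrM.mul hsv).trans ?_⟩
  rw [← hmult.2]
  exact hρ.mono hQM

theorem dclos_smul_optImprint_subset_optImprint_mcat [Semiring R] (h𝒞 : LangLattice 𝒞)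
    (hqc : QuotientClosed 𝒞) (hreg : ∀ L ∈ 𝒞, RegularLang L) (hρ : IsRatingMap ρ)
    (hmult : IsMultiplicative ρ) (K L : Lang A) (a : A) :
    dclos (smul (smul (optImprint 𝒞 ρ K) {ρ {[a]}}) (optImprint 𝒞 ρ L)) ⊆
      optImprint 𝒞 ρ (mcat K a L) := by
  rintro q ⟨_, ⟨_, ⟨r, hr, _, rfl, rfl⟩, s, hs, rfl⟩, hq⟩
  rw [mcat_eq_cat_cat]
  have hra : r * ρ {[a]} ∈ optImprint 𝒞 ρ (cat K {[a]}) :=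
    mul_mem_optImprint_cat h𝒞 hqc hreg hρ hmult hr (hρ.map_singleton_mem_optImprint 𝒞 [a])
  exact mem_optImprint_of_rle (mul_mem_optImprint_cat h𝒞 hqc hreg hρ hmult hra hs) hq

theorem exists_finite_forall_map_cclass_mem_optImprint [AddCommMonoid R] [Finite R]
    (hρ : IsRatingMap ρ) (𝒟 : LClass A) (K : Lang A) :
    ∃ F : LClass A, F.Finite ∧ F ⊆ 𝒟 ∧
      ∀ G, F ⊆ G → ∀ u ∈ K, ρ (cclass G u) ∈ optImprint (BoolC 𝒟) ρ K := by
  have hwitness : ∀ r ∉ optImprint (BoolC 𝒟) ρ K,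
      ∃ Ks, IsCCover (BoolC 𝒟) Ks K ∧ r ∉ imprint ρ Ks := by
    simp [optImprint]
  choose! Ks hKs hr using hwitness
  obtain ⟨F, hF, hF𝒟, hKsF⟩ : ∃ F : LClass A, F.Finite ∧ F ⊆ 𝒟 ∧
      ⋃ r ∈ (optImprint (BoolC 𝒟) ρ K)ᶜ, Ks r ⊆ BoolC F :=
    exists_finite_subset_subset_boolC ((toFinite _).biUnion fun r hr => (hKs r hr).1.1)
      (iUnion₂_subset fun r hr => (hKs r hr).2)
  refine ⟨F, hF, hF𝒟, fun G hFG u hu => by_contra fun hnot => hr _ hnot ?_⟩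
  obtain ⟨L, hL, huL⟩ := (hKs _ hnot).1.2 hu
  have hLF : L ∈ BoolC F := hKsF (mem_biUnion hnot hL)
  exact ⟨L, hL, hρ.mono fun x hx => ((hx.mono hFG).boolC L hLF).1 huL⟩

end Ratings

/-! ### Marked concatenations of upsets -/

section UpsetMcats

variable {𝒟 F : LClass A} {K₁ K₂ : Lang A} {a : A} {w : List A}

/-- The marked concatenations `↑u a ↑v` of upsets for `≤_F`. Their Boolean atoms are the members
of the covers of marked concatenations. -/
def upsetMcats (F : LClass A) (a : A) : LClass A :=
  image2 (fun U V => mcat U a V) (range (cupset F)) (range (cupset F))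

theorem finite_upsetMcats (hF : F.Finite) (a : A) : (upsetMcats F a).Finite :=
  (finite_range_cupset hF).image2 _ (finite_range_cupset hF)

theorem upsetMcats_subset (hlat : LangLattice 𝒟)
    (hmcat : ∀ (K L : Lang A) (a : A), K ∈ 𝒟 → L ∈ 𝒟 → mcat K a L ∈ 𝒟)
    (hF : F.Finite) (hF𝒟 : F ⊆ 𝒟) (a : A) : upsetMcats F a ⊆ 𝒟 := by
  rintro _ ⟨_, ⟨u, rfl⟩, _, ⟨v, rfl⟩, rfl⟩
  exact hmcat _ _ a (hlat.cupset_mem hF hF𝒟 u) (hlat.cupset_mem hF hF𝒟 v)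

theorem exists_cle_factorisation_of_ceq_upsetMcats {u v : List A} (a : A)
    (h : ceq (upsetMcats F a) (u ++ a :: v) w) :
    ∃ u' v', u' ++ a :: v' = w ∧ cle F u u' ∧ cle F v v' := by
  have hmem : u ++ a :: v ∈ mcat (cupset F u) a (cupset F v) :=
    ⟨u, mem_cupset_self F u, v, mem_cupset_self F v, rfl⟩
  obtain ⟨u', hu', v', hv', hw⟩ :=
    (h _ (mem_image2_of_mem (mem_range_self u) (mem_range_self v))).1 hmem
  exact ⟨u', v', hw, hu', hv'⟩

theorem exists_maximal_factorisation (hF : F.Finite) (hw : w ∈ mcat K₁ a K₂) :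
    ∃ u ∈ K₁, ∃ v ∈ K₂, u ++ a :: v = w ∧
      ∀ u' ∈ K₁, ∀ v' ∈ K₂, u' ++ a :: v' = w → cle F u u' → cle F v v' →
        cle F u' u ∧ cle F v' v := by
  obtain ⟨u₀, hu₀, v₀, hv₀, hw₀⟩ := hw
  let S : Set (List A × List A) := {p | p.1 ∈ K₁ ∧ p.2 ∈ K₂ ∧ p.1 ++ a :: p.2 = w}
  let f : List A × List A → Lang A × Lang A := Prod.map (cupset F) (cupset F)
  have hfin : (f '' S).Finite := by
    refine ((finite_range_cupset hF).prod (finite_range_cupset hF)).subset ?_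
    exact image_subset_iff.2 fun p _ => ⟨mem_range_self p.1, mem_range_self p.2⟩
  obtain ⟨⟨u, v⟩, ⟨hu, hv, huv⟩, hmin⟩ :=
    Set.Finite.exists_minimalFor' f S hfin ⟨(u₀, v₀), hu₀, hv₀, hw₀⟩
  refine ⟨u, hu, v, hv, huv, fun u' hu' v' hv' huv' hcu hcv => ?_⟩
  have hle : f (u, v) ≤ f (u', v') := hmin (j := (u', v')) ⟨hu', hv', huv'⟩
    ⟨cupset_subset_cupset_iff.2 hcu, cupset_subset_cupset_iff.2 hcv⟩
  exact ⟨cupset_subset_cupset_iff.1 hle.1, cupset_subset_cupset_iff.1 hle.2⟩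

theorem exists_cclass_upsetMcats_subset_mcat_cclass (hF : F.Finite) (hK₁ : K₁ ∈ F)
    (hK₂ : K₂ ∈ F) (hw : w ∈ mcat K₁ a K₂) :
    ∃ u ∈ K₁, ∃ v ∈ K₂, cclass (upsetMcats F a) w ⊆ mcat (cclass F u) a (cclass F v) := by
  obtain ⟨u, hu, v, hv, rfl, hmax⟩ := exists_maximal_factorisation hF hw
  refine ⟨u, hu, v, hv, fun w' hw' => ?_⟩
  obtain ⟨u', v', rfl, huu', hvv'⟩ := exists_cle_factorisation_of_ceq_upsetMcats a hw'
  obtain ⟨u'', v'', huv'', hu'', hv''⟩ :=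
    exists_cle_factorisation_of_ceq_upsetMcats a fun L hL => (hw' L hL).symm
  have hcu := huu'.trans hu''
  have hcv := hvv'.trans hv''
  obtain ⟨hu''u, hv''v⟩ := hmax u'' (hcu K₁ hK₁ hu) v'' (hcv K₂ hK₂ hv) huv'' hcu hcv
  exact ⟨u', ceq_of_cle_of_cle huu' (hu''.trans hu''u),
    v', ceq_of_cle_of_cle hvv' (hv''.trans hv''v), rfl⟩

theorem optImprint_mcat_subset_dclos_smul_optImprint [Semiring R] [Finite R]
    (hlat : LangLattice 𝒟)
    (hmcat : ∀ (K L : Lang A) (a : A), K ∈ 𝒟 → L ∈ 𝒟 → mcat K a L ∈ 𝒟)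
    {ρ : Lang A → R} (hρ : IsRatingMap ρ) (hmult : IsMultiplicative ρ)
    (hK₁ : K₁ ∈ 𝒟) (hK₂ : K₂ ∈ 𝒟) (a : A) :
    optImprint (BoolC 𝒟) ρ (mcat K₁ a K₂) ⊆
      dclos (smul (smul (optImprint (BoolC 𝒟) ρ K₁) {ρ {[a]}}) (optImprint (BoolC 𝒟) ρ K₂)) := by
  intro r hr
  obtain ⟨F₁, hF₁, hF₁𝒟, hopt₁⟩ := exists_finite_forall_map_cclass_mem_optImprint hρ 𝒟 K₁
  obtain ⟨F₂, hF₂, hF₂𝒟, hopt₂⟩ := exists_finite_forall_map_cclass_mem_optImprint hρ 𝒟 K₂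
  let F : LClass A := insert K₁ F₁ ∪ insert K₂ F₂
  have hF : F.Finite := (hF₁.insert K₁).union (hF₂.insert K₂)
  have hF𝒟 : F ⊆ 𝒟 := union_subset (insert_subset hK₁ hF₁𝒟) (insert_subset hK₂ hF₂𝒟)
  have hF₁F : insert K₁ F₁ ⊆ F := subset_union_left
  have hF₂F : insert K₂ F₂ ⊆ F := subset_union_right
  have hcover := (langBoolAlg_boolC 𝒟).isCCover_image_cclass (finite_upsetMcats hF a)
    ((upsetMcats_subset hlat hmcat hF hF𝒟 a).trans (subset_boolC 𝒟)) (mcat K₁ a K₂)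
  obtain ⟨_, ⟨w, hw, rfl⟩, hrw⟩ := hr _ hcover
  obtain ⟨u, hu, v, hv, hsub⟩ := exists_cclass_upsetMcats_subset_mcat_cclass hF
    (hF₁F (mem_insert _ _)) (hF₂F (mem_insert _ _)) hw
  have hu_opt := hopt₁ F ((subset_insert _ _).trans hF₁F) u hu
  have hv_opt := hopt₂ F ((subset_insert _ _).trans hF₂F) v hv
  refine ⟨_, ⟨_, ⟨_, hu_opt, _, rfl, rfl⟩, _, hv_opt, rfl⟩, ?_⟩
  rw [← hmult.map_mcat]
  exact hrw.trans (hρ.mono hsub)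

end UpsetMcats

theorem statement15_general [Semiring R] [Finite R] {𝒟 : LClass A} (hlat : LangLattice 𝒟)
    (hqc : QuotientClosed 𝒟) (hreg : ∀ L ∈ 𝒟, RegularLang L)
    (hmcat : ∀ (K L : Lang A) (a : A), K ∈ 𝒟 → L ∈ 𝒟 → mcat K a L ∈ 𝒟)
    {ρ : Lang A → R} (hρ : IsRatingMap ρ) (hmult : IsMultiplicative ρ)
    {K₁ K₂ : Lang A} (hK₁ : K₁ ∈ 𝒟) (hK₂ : K₂ ∈ 𝒟) (a : A) :
    optImprint (BoolC 𝒟) ρ (mcat K₁ a K₂) =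
      dclos (smul (smul (optImprint (BoolC 𝒟) ρ K₁) {ρ {[a]}})
        (optImprint (BoolC 𝒟) ρ K₂)) :=
  Subset.antisymm
    (optImprint_mcat_subset_dclos_smul_optImprint hlat hmcat hρ hmult hK₁ hK₂ a)
    (dclos_smul_optImprint_subset_optImprint_mcat (langBoolAlg_boolC 𝒟).1 hqc.boolC
      (fun _ => regularLang_of_mem_boolC hreg) hρ hmult K₁ K₂ a)

/-- Optimal `Bool(𝒟)`-imprints of marked concatenations. -/
theorem statement15 {A R : Type} [Fintype A] [Semiring R] [Finite R]
    (hidem : ∀ r : R, r + r = r)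
    (𝒟 : LClass A) (hlat : LangLattice 𝒟) (hqc : QuotientClosed 𝒟)
    (hreg : ∀ L ∈ 𝒟, RegularLang L)
    (hmcat : ∀ (K L : Lang A) (a : A), K ∈ 𝒟 → L ∈ 𝒟 → mcat K a L ∈ 𝒟)
    (ρ : Lang A → R) (hρ : IsRatingMap ρ) (hmult : IsMultiplicative ρ)
    (K₁ K₂ : Lang A) (hK₁ : K₁ ∈ 𝒟) (hK₂ : K₂ ∈ 𝒟) (a : A) :
    optImprint (BoolC 𝒟) ρ (mcat K₁ a K₂) =
      dclos (smul (smul (optImprint (BoolC 𝒟) ρ K₁) {ρ ({[a]} : Lang A)})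
        (optImprint (BoolC 𝒟) ρ K₂)) := by
  exact statement15_general hlat hqc hreg hmcat hρ hmult hK₁ hK₂ a

end Paper
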